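/- Let Ω ⊂ ℝⁿ be a bounded open domain, q > 1 and a satisfy −∞ < a < q−1, and let δ(x) = dist(x, ∂Ω). Assume the weighted Hardy inequality ∫_Ω (|u(x)|/δ(x))^q·δ(x)^a dx ≤ C·∫_Ω |∇u(x)|^q·δ(x)^a dx for every u ∈ C₀^∞(Ω) (which holds, by Necas's theorem, whenever Ω is a bounded Lipschitz domain). If p ≥ 2, r > 1 and 2/p = 1/q + 1/r, then there exists a constant c > 0 independent of u such that for every u ∈ C₀^∞(Ω): ( ∫_Ω |∇u(x)|^p·δ(x)^a dx )^{2/p} ≤ c·( ∫_Ω |∇⁽²⁾u(x)|^q·δ(x)^a dx )^{1/q}·( ∫_Ω |u(x)|^r·δ(x)^a dx )^{1/r}. -/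

import Mathlib

/-!
The inequality is proved for each partial derivative `w = ∂_i u` separately. Since
`|w|^p = ∂_i u · |w|^(p-2) w`, integration by parts moves `∂_i` from `u` to the field
`|w|^(p-2) w δ^a` (`integral_rpow_fderiv_apply_le`). This field is only Lipschitz, because `δ` is;
Rademacher's theorem gives the product rule almost everywhere, and `|∂_i δ| ≤ 1` leads to
`∫ |w|^p δ^a ≤ (p-1) ∫ |u| |w|^(p-2) |∂_i w| δ^a + |a| ∫ |u| |w|^(p-2) (|w|/δ) δ^a`.

Both integrals on the right are bounded by Hölder's inequality with exponents `r`, `p/(p-2)`, `q`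
(`integral_mul_rpow_mul_le`). The weighted Hardy inequality, applied to the test function `w`,
controls `|w|/δ` in the weighted `L^q` norm by `∇w`, hence by the Hessian of `u`. With
`J = ∫ |w|^p δ^a` this reads `J ≤ A · J^(1-2/p) · ‖∇²u‖_q · ‖u‖_r`, and dividing by `J^(1-2/p)`
gives the claim for `∂_i u` (`rpow_integral_fderiv_apply_le`). Finally
`|∇u|^p ≤ n^(p/2) ∑ |∂_i u|^p` (`rpow_integral_norm_gradient_le`).

Working with one coordinate at a time means that only the scalar map `t ↦ |t|^(p-2) t`, which is
`C¹` for `p ≥ 2`, has to be differentiated. In dimension `0`, where the boundary is empty and `δ`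
vanishes, the gradient is zero.
-/

open MeasureTheory Filter Set

noncomputable section

/-- `E n` is the Euclidean space `ℝⁿ`. -/
abbrev E (n : ℕ) := EuclideanSpace ℝ (Fin n)

/-- An `N`-function: a continuous convex function `M : [0,∞) → [0,∞)` with `M(0) = 0`,
`lim_{λ→0} M(λ)/λ = 0` and `lim_{λ→∞} λ/M(λ) = 0`. -/
def IsNFunction (M : ℝ → ℝ) : Prop :=
  ContinuousOn M (Ici 0) ∧ ConvexOn ℝ (Ici 0) M ∧ M 0 = 0 ∧
  (∀ x ≥ (0:ℝ), 0 ≤ M x) ∧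
  Tendsto (fun l => M l / l) (nhdsWithin 0 (Ioi 0)) (nhds 0) ∧
  Tendsto (fun l => l / M l) atTop (nhds 0)

/-- The Δ₂-condition. -/
def Delta2 (M : ℝ → ℝ) : Prop := ∃ c > 0, ∀ l > (0:ℝ), M (2 * l) ≤ c * M l

/-- Condition (M): `M` is an `N`-function of class `C¹` on `(0,∞)` satisfying the
Δ₂-condition and such that `M'(λ)/λ` is bounded near zero. -/
def CondM (M : ℝ → ℝ) : Prop :=
  IsNFunction M ∧ ContDiffOn ℝ 1 M (Ioi 0) ∧ Delta2 M ∧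
  ∃ ε > (0:ℝ), ∃ C : ℝ, ∀ l ∈ Ioo (0:ℝ) ε, deriv M l / l ≤ C

/-- Condition (Y): `P, Q` are nonnegative nondecreasing measurable functions vanishing at `0`
such that the Young-type inequality `(M(u)/u²)·v·w ≤ M(u) + P(v) + Q(w)` holds. -/
def CondY (M P Q : ℝ → ℝ) : Prop :=
  Measurable P ∧ Measurable Q ∧ (∀ x ≥ (0:ℝ), 0 ≤ P x) ∧ (∀ x ≥ (0:ℝ), 0 ≤ Q x) ∧
  MonotoneOn P (Ici 0) ∧ MonotoneOn Q (Ici 0) ∧ P 0 = 0 ∧ Q 0 = 0 ∧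
  ∀ u > (0:ℝ), ∀ v > (0:ℝ), ∀ w > (0:ℝ), M u / u ^ 2 * v * w ≤ M u + P v + Q w

/-- `φ` is locally Lipschitz on `Ω`. -/
def LocLipschitzOn {α : Type*} [MetricSpace α] (Ω : Set α) (φ : α → ℝ) : Prop :=
  ∀ x ∈ Ω, ∃ s ∈ nhdsWithin x Ω, ∃ K : NNReal, LipschitzOnWith K φ s

/-- The measure `μ(dx) = e^{-φ(x)} dx` on the domain `Ω`. -/
def measOf {n : ℕ} (Ω : Set (E n)) (φ : E n → ℝ) : Measure (E n) :=
  (volume.restrict Ω).withDensity fun x => ENNReal.ofReal (Real.exp (-φ x))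

/-- `u ∈ C₀^∞(Ω)`: smooth and compactly supported inside `Ω`. -/
def TestFun {n : ℕ} (Ω : Set (E n)) (u : E n → ℝ) : Prop :=
  ContDiff ℝ (⊤ : ℕ∞) u ∧ HasCompactSupport u ∧ tsupport u ⊆ Ω

/-- The Hilbert–Schmidt norm of the Hessian of `u` at `x`. -/
def hessNormHS {n : ℕ} (u : E n → ℝ) (x : E n) : ℝ :=
  Real.sqrt (∑ i : Fin n, ∑ j : Fin n,
    (iteratedFDeriv ℝ 2 u x ![EuclideanSpace.single i (1:ℝ), EuclideanSpace.single j (1:ℝ)]) ^ 2)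

/-- The Luxemburg norm `‖f‖_{L^R(μ)} = inf {K > 0 : ∫ R(|f|/K) dμ ≤ 1}`. -/
def luxNorm {α : Type*} [MeasurableSpace α] (R : ℝ → ℝ) (μ : Measure α) (f : α → ℝ) : ℝ :=
  sInf {K : ℝ | 0 < K ∧ ∫ x, R (|f x| / K) ∂μ ≤ 1}

/-- `δ(x) = dist(x, ∂Ω)`, the distance from `x` to the boundary of `Ω`. -/
def distBdry {n : ℕ} (Ω : Set (E n)) (x : E n) : ℝ := Metric.infDist x (frontier Ω)

open scoped ENNReal NNReal

/-! ### Calculus and integration preliminaries -/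

theorem hasDerivAt_abs_rpow_mul {p : ℝ} (hp : 2 ≤ p) (t : ℝ) :
    HasDerivAt (fun t : ℝ => |t| ^ (p - 2) * t) ((p - 1) * |t| ^ (p - 2)) t := by
  have key : ∀ t : ℝ, t ≠ 0 →
      HasDerivAt (fun t : ℝ => |t| ^ (p - 2) * t) ((p - 1) * |t| ^ (p - 2)) t := by
    intro t ht
    have h1 := ((hasDerivAt_abs ht).rpow_const (p := p - 2) (Or.inl (abs_ne_zero.2 ht))).mul
      (hasDerivAt_id t)
    convert! h1 using 1
    have h2 : |t| ^ (p - 2) = |t| ^ (p - 2 - 1) * |t| := by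
      rw [← Real.rpow_add_one (abs_ne_zero.2 ht)]; ring_nf
    have h3 : (SignType.sign t : ℝ) * t = |t| := sign_mul_self t
    simp only [id]
    calc (p - 1) * |t| ^ (p - 2)
        = (p - 2) * (|t| ^ (p - 2 - 1) * |t|) + |t| ^ (p - 2) := by rw [← h2]; ring
      _ = _ := by rw [← h3]; ring
  have hc : Continuous fun t : ℝ => |t| ^ (p - 2) :=
    continuous_abs.rpow_const fun _ => Or.inr (by linarith)
  -- At `0` the derivative is recovered as the limit of the derivatives at nearby points.
  by_cases ht : t = 0
  · subst ht
    exact hasDerivAt_of_hasDerivAt_of_ne (fun y hy => key y hy)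
      (hc.mul continuous_id).continuousAt (continuous_const.mul hc).continuousAt
  · exact key t ht

theorem contDiff_abs_rpow_mul {p : ℝ} (hp : 2 ≤ p) :
    ContDiff ℝ 1 (fun t : ℝ => |t| ^ (p - 2) * t) := by
  rw [contDiff_one_iff_deriv]
  refine ⟨fun t => (hasDerivAt_abs_rpow_mul hp t).differentiableAt, ?_⟩
  rw [funext fun t => (hasDerivAt_abs_rpow_mul hp t).deriv]
  exact continuous_const.mul (continuous_abs.rpow_const fun _ => Or.inr (by linarith))

/-- A compactly supported locally Lipschitz function is globally Lipschitz. -/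
theorem exists_lipschitzWith_of_hasCompactSupport {X : Type*} [MetricSpace X] [ProperSpace X]
    {F : X → ℝ} (h : LocallyLipschitz F) (hc : HasCompactSupport F) :
    ∃ K, LipschitzWith K F := by
  obtain ⟨L, hL⟩ := LocallyLipschitzOn.exists_lipschitzOnWith_of_compact
    (s := Metric.cthickening 1 (tsupport F)) (hc.isCompact.cthickening)
    h.locallyLipschitzOn
  obtain ⟨M, hM⟩ := hc.exists_bound_of_continuous h.continuous
  -- A point of the support is at distance at least `1` from any point outside the thickening,
  -- so there the uniform bound `M` serves as a Lipschitz constant.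
  have far : ∀ x y, x ∉ Metric.cthickening 1 (tsupport F) →
      dist (F x) (F y) ≤ max L M.toNNReal * dist x y := by
    intro x y hx
    have hx0 : F x = 0 :=
      image_eq_zero_of_notMem_tsupport fun h' => hx (Metric.self_subset_cthickening _ h')
    by_cases hy : y ∈ tsupport F
    · have hd : 1 ≤ dist x y := by
        by_contra! hlt
        exact hx (Metric.mem_cthickening_of_dist_le x y 1 _ hy hlt.le)
      have h1 : dist (F x) (F y) ≤ M := by
        rw [hx0, dist_zero_left]; exact hM y
      have h2 : M ≤ max (L : ℝ) M.toNNReal := (Real.le_coe_toNNReal M).trans (le_max_right _ _)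
      have h3 : 0 ≤ max (L : ℝ) M.toNNReal := le_max_of_le_left L.2
      push_cast at *
      nlinarith
    · rw [hx0, image_eq_zero_of_notMem_tsupport hy, dist_self]
      positivity
  refine ⟨max L M.toNNReal, LipschitzWith.of_dist_le_mul fun x y => ?_⟩
  by_cases hx : x ∈ Metric.cthickening 1 (tsupport F)
  · by_cases hy : y ∈ Metric.cthickening 1 (tsupport F)
    · refine (hL.dist_le_mul x hx y hy).trans ?_
      gcongr
      exact le_max_left _ _
    · rw [dist_comm, dist_comm x]
      exact far y x hy
  · exact far x y hx

/-- Hölder's inequality for three functions with exponents that may vanish, so that the case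
`p = 2`, where one of the three exponents of the argument is `∞`, needs no separate treatment. -/
theorem integral_rpow_mul_rpow_mul_rpow_le {α : Type*} [MeasurableSpace α] {μ : Measure α}
    {f g h : α → ℝ} (hf : Integrable f μ) (hg : Integrable g μ) (hh : Integrable h μ)
    (hf0 : ∀ x, 0 ≤ f x) (hg0 : ∀ x, 0 ≤ g x) (hh0 : ∀ x, 0 ≤ h x)
    {s t w : ℝ} (hs : 0 ≤ s) (ht : 0 ≤ t) (hw : 0 ≤ w) (hsum : s + t + w = 1) :
    ∫ x, f x ^ s * g x ^ t * h x ^ w ∂μ ≤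
      (∫ x, f x ∂μ) ^ s * (∫ x, g x ∂μ) ^ t * (∫ x, h x ∂μ) ^ w := by
  have H := ENNReal.lintegral_prod_norm_pow_le (μ := μ) (Finset.univ : Finset (Fin 3))
    (f := ![fun x => ENNReal.ofReal (f x), fun x => ENNReal.ofReal (g x),
      fun x => ENNReal.ofReal (h x)]) (p := ![s, t, w])
    (by
      intro i _
      fin_cases i
      · exact hf.aemeasurable.ennreal_ofReal
      · exact hg.aemeasurable.ennreal_ofReal
      · exact hh.aemeasurable.ennreal_ofReal)
    (by simp [Fin.sum_univ_three, hsum])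
    (by intro i _; fin_cases i <;> simpa)
  simp only [Fin.prod_univ_three, Matrix.cons_val_zero, Matrix.cons_val_one,
    Matrix.cons_val] at H
  rw [← ofReal_integral_eq_lintegral_ofReal hf (ae_of_all _ hf0),
    ← ofReal_integral_eq_lintegral_ofReal hg (ae_of_all _ hg0),
    ← ofReal_integral_eq_lintegral_ofReal hh (ae_of_all _ hh0),
    ENNReal.ofReal_rpow_of_nonneg (integral_nonneg hf0) hs,
    ENNReal.ofReal_rpow_of_nonneg (integral_nonneg hg0) ht,
    ENNReal.ofReal_rpow_of_nonneg (integral_nonneg hh0) hw,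
    ← ENNReal.ofReal_mul (Real.rpow_nonneg (integral_nonneg hf0) _),
    ← ENNReal.ofReal_mul (mul_nonneg (Real.rpow_nonneg (integral_nonneg hf0) _)
      (Real.rpow_nonneg (integral_nonneg hg0) _))] at H
  have hpt : ∀ x, ENNReal.ofReal (f x) ^ s * ENNReal.ofReal (g x) ^ t * ENNReal.ofReal (h x) ^ w
      = ENNReal.ofReal (f x ^ s * g x ^ t * h x ^ w) := by
    intro x
    rw [ENNReal.ofReal_rpow_of_nonneg (hf0 x) hs, ENNReal.ofReal_rpow_of_nonneg (hg0 x) ht,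
      ENNReal.ofReal_rpow_of_nonneg (hh0 x) hw, ← ENNReal.ofReal_mul (Real.rpow_nonneg (hf0 x) _),
      ← ENNReal.ofReal_mul (mul_nonneg (Real.rpow_nonneg (hf0 x) _) (Real.rpow_nonneg (hg0 x) _))]
  simp only [hpt] at H
  have hI0 : 0 ≤ (∫ x, f x ∂μ) ^ s * (∫ x, g x ∂μ) ^ t * (∫ x, h x ∂μ) ^ w :=
    mul_nonneg (mul_nonneg (Real.rpow_nonneg (integral_nonneg hf0) _)
      (Real.rpow_nonneg (integral_nonneg hg0) _)) (Real.rpow_nonneg (integral_nonneg hh0) _)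
  rw [integral_eq_lintegral_of_nonneg_ae
    (ae_of_all _ fun x => mul_nonneg (mul_nonneg (Real.rpow_nonneg (hf0 x) _)
      (Real.rpow_nonneg (hg0 x) _)) (Real.rpow_nonneg (hh0 x) _))]
  · exact ENNReal.toReal_le_of_le_ofReal hI0 H
  · exact (((hf.aemeasurable.pow_const _).mul (hg.aemeasurable.pow_const _)).mul
      (hh.aemeasurable.pow_const _)).aestronglyMeasurable

theorem integrable_of_continuousOn_of_eq_zero {n : ℕ} {Ω K : Set (E n)} {F : E n → ℝ}
    (hK : IsCompact K) (hKΩ : K ⊆ Ω) (hc : ContinuousOn F Ω) (h0 : ∀ x ∉ K, F x = 0) :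
    Integrable F := by
  rw [← integrableOn_iff_integrable_of_support_subset (s := K)]
  · exact (hc.mono hKΩ).integrableOn_compact hK
  · exact fun x hx => by_contra fun h => hx (h0 x h)

section

/-! ### The distance to the boundary and test functions -/

variable {n : ℕ} {Ω : Set (E n)}

theorem distBdry_nonneg (x : E n) : 0 ≤ distBdry Ω x := Metric.infDist_nonneg

theorem lipschitzWith_distBdry : LipschitzWith 1 (distBdry Ω) :=
  Metric.lipschitz_infDist_pt _

theorem distBdry_pos [NeZero n] (hΩo : IsOpen Ω) (hΩb : Bornology.IsBounded Ω) {x : E n}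
    (hx : x ∈ Ω) : 0 < distBdry Ω x := by
  have hne : (frontier Ω).Nonempty := by
    rw [nonempty_frontier_iff]
    refine ⟨⟨x, hx⟩, fun h => ?_⟩
    rw [h] at hΩb
    exact NormedSpace.unbounded_univ ℝ (E n) hΩb
  refine (Metric.infDist_pos_iff_notMem_closure hne).1 ?_
  rw [isClosed_frontier.closure_eq]
  exact fun h => h.2 (hΩo.interior_eq.symm ▸ hx)

theorem continuousOn_distBdry_rpow (hδ : ∀ x ∈ Ω, 0 < distBdry Ω x) (a : ℝ) :
    ContinuousOn (fun x => distBdry Ω x ^ a) Ω :=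
  lipschitzWith_distBdry.continuous.continuousOn.rpow_const fun x hx => Or.inl (hδ x hx).ne'

theorem TestFun.fderiv_apply {u : E n → ℝ} (hu : TestFun Ω u) (v : E n) :
    TestFun Ω (fun x => fderiv ℝ u x v) :=
  ⟨(hu.1.fderiv_right (by simp)).clm_apply contDiff_const, hu.2.1.fderiv_apply ℝ v,
    (tsupport_fderiv_apply_subset ℝ v).trans hu.2.2⟩

theorem TestFun.differentiable {u : E n → ℝ} (hu : TestFun Ω u) : Differentiable ℝ u :=
  hu.1.differentiable (by simp)

/-! ### Integration by parts against a Lipschitz field -/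

/-- The test field `|w|^(p-2) w δ^a` is Lipschitz: `δ` is `1`-Lipschitz and positive near the
support of `w`, where `t ↦ t ^ a` is smooth. -/
theorem exists_lipschitzWith_testField (hδ : ∀ x ∈ Ω, 0 < distBdry Ω x)
    {w : E n → ℝ} (hw : TestFun Ω w) {p : ℝ} (hp : 2 ≤ p) (a : ℝ) :
    (∃ L, LipschitzWith L fun x => |w x| ^ (p - 2) * w x * distBdry Ω x ^ a) ∧
      HasCompactSupport fun x => |w x| ^ (p - 2) * w x * distBdry Ω x ^ a := by
  have hc : HasCompactSupport fun x => |w x| ^ (p - 2) * w x * distBdry Ω x ^ a :=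
    hw.2.1.mono fun x hx h => hx (by simp [h])
  refine ⟨exists_lipschitzWith_of_hasCompactSupport (fun x => ?_) hc, hc⟩
  by_cases hx : x ∈ tsupport w
  · have hΨ : ContDiffAt ℝ 1
        (fun z : E n × ℝ => |w z.1| ^ (p - 2) * w z.1 * z.2 ^ a) (x, distBdry Ω x) := by
      refine ContDiffAt.mul ?_ ?_
      · have h1 : ContDiff ℝ 1 w := hw.1.of_le (by norm_cast)
        exact ((contDiff_abs_rpow_mul hp).comp (h1.comp contDiff_fst)).contDiffAt
      · exact contDiffAt_snd.rpow_const_of_ne (hδ x (hw.2.2 hx)).ne'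
    obtain ⟨K, s, hs, hK⟩ := hΨ.exists_lipschitzOnWith
    have hid : LipschitzWith (max 1 1) fun y : E n => (y, distBdry Ω y) :=
      LipschitzWith.id.prodMk lipschitzWith_distBdry
    have hcomp := hK.comp (hid.lipschitzOnWith (s := (fun y : E n => (y, distBdry Ω y)) ⁻¹' s))
      (fun y hy => hy)
    exact ⟨_, _, hid.continuous.continuousAt.preimage_mem_nhds hs, hcomp⟩
  · refine ⟨0, (tsupport w)ᶜ, (isClosed_tsupport w).isOpen_compl.mem_nhds hx, ?_⟩
    intro y hy z hz
    simp [image_eq_zero_of_notMem_tsupport hy, image_eq_zero_of_notMem_tsupport hz]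

/-- Pointwise bound for the derivative of the test field, obtained from the product rule and
`|∂_v δ| ≤ ‖v‖`. -/
theorem abs_lineDeriv_testField_le {w : E n → ℝ} {p : ℝ} (hp : 2 ≤ p) (a : ℝ) {x v : E n}
    (hw : DifferentiableAt ℝ w x) (hd : DifferentiableAt ℝ (distBdry Ω) x)
    (hx : 0 < distBdry Ω x) (hv : ‖v‖ ≤ 1) :
    |lineDeriv ℝ (fun x => |w x| ^ (p - 2) * w x * distBdry Ω x ^ a) x v| ≤
      (p - 1) * (|w x| ^ (p - 2) * |fderiv ℝ w x v| * distBdry Ω x ^ a) +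
        |a| * (|w x| ^ (p - 2) * (|w x| / distBdry Ω x) * distBdry Ω x ^ a) := by
  set D := lineDeriv ℝ (distBdry Ω) x v with hDdef
  have hD : |D| ≤ 1 := by
    have h := norm_lineDeriv_le_of_lipschitz ℝ (v := v) (x₀ := x)
      (lipschitzWith_distBdry (Ω := Ω))
    rw [Real.norm_eq_abs] at h
    simpa using h.trans (by simpa using hv)
  have h1 : HasDerivAt (fun t : ℝ => w (x + t • v)) (fderiv ℝ w x v) 0 :=
    hw.hasFDerivAt.hasLineDerivAt v
  have h2 : HasDerivAt (fun t : ℝ => distBdry Ω (x + t • v)) D 0 :=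
    hd.lineDifferentiableAt.hasLineDerivAt
  have h3 := (hasDerivAt_abs_rpow_mul hp (w (x + (0 : ℝ) • v))).comp (0 : ℝ) h1
  have h4 := h2.rpow_const (p := a) (Or.inl (by simpa using hx.ne'))
  have h5 : HasLineDerivAt ℝ (fun x => |w x| ^ (p - 2) * w x * distBdry Ω x ^ a) _ x v :=
    h3.mul h4
  rw [h5.lineDeriv]
  simp only [zero_smul, add_zero, Function.comp]
  have hsub : distBdry Ω x ^ (a - 1) = distBdry Ω x ^ a / distBdry Ω x :=
    Real.rpow_sub_one hx.ne' a
  rw [hsub]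
  have hw0 : 0 ≤ |w x| ^ (p - 2) := Real.rpow_nonneg (abs_nonneg _) _
  have hda : 0 ≤ distBdry Ω x ^ a := Real.rpow_nonneg hx.le _
  refine (abs_add_le _ _).trans (add_le_add (le_of_eq ?_) ?_)
  · rw [abs_mul, abs_mul, abs_mul, abs_of_nonneg hw0, abs_of_nonneg hda,
      abs_of_nonneg (by linarith : 0 ≤ p - 1)]
    ring
  · rw [abs_mul, abs_mul, abs_mul, abs_mul, abs_div, abs_of_nonneg hw0, abs_of_nonneg hda,
      abs_of_pos hx]
    calc |w x| ^ (p - 2) * |w x| * (|D| * |a| * (distBdry Ω x ^ a / distBdry Ω x))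
        = |D| * (|a| * (|w x| ^ (p - 2) * (|w x| / distBdry Ω x) * distBdry Ω x ^ a)) := by ring
      _ ≤ 1 * (|a| * (|w x| ^ (p - 2) * (|w x| / distBdry Ω x) * distBdry Ω x ^ a)) := by
          gcongr
      _ = _ := one_mul _

theorem integrable_of_testFun (hδ : ∀ x ∈ Ω, 0 < distBdry Ω x) {u : E n → ℝ} (hu : TestFun Ω u)
    {F : E n → ℝ} (hF : ContinuousOn F Ω) (h0 : ∀ x ∉ tsupport u, F x = 0) (a : ℝ) :
    Integrable fun x => F x * distBdry Ω x ^ a :=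
  integrable_of_continuousOn_of_eq_zero hu.2.1.isCompact hu.2.2
    (hF.mul (continuousOn_distBdry_rpow hδ a)) fun x hx => by rw [h0 x hx, zero_mul]

/-- The integration by parts underlying the theorem: `w = ∂_v u` is paired with the test field
`|w|^(p-2) w δ^a`, and the derivative is moved off `u`. -/
theorem integral_rpow_fderiv_apply_le (hδ : ∀ x ∈ Ω, 0 < distBdry Ω x)
    {u : E n → ℝ} (hu : TestFun Ω u) {p : ℝ} (hp : 2 ≤ p) (a : ℝ) {v : E n} (hv : ‖v‖ ≤ 1)
    {w : E n → ℝ} (hwdef : w = fun x => fderiv ℝ u x v) :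
    ∫ x in Ω, |w x| ^ p * distBdry Ω x ^ a ≤
      (p - 1) * (∫ x in Ω, |u x| * |w x| ^ (p - 2) * |fderiv ℝ w x v| * distBdry Ω x ^ a) +
        |a| * ∫ x in Ω, |u x| * |w x| ^ (p - 2) * (|w x| / distBdry Ω x) * distBdry Ω x ^ a := by
  have hw : TestFun Ω w := hwdef ▸ hu.fderiv_apply v
  obtain ⟨⟨L, hL⟩, hGc⟩ := exists_lipschitzWith_testField hδ hw hp a
  set G : E n → ℝ := fun x => |w x| ^ (p - 2) * w x * distBdry Ω x ^ a with hG
  have hu0 : ∀ x ∉ Ω, u x = 0 := fun x hx =>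
    image_eq_zero_of_notMem_tsupport fun h => hx (hu.2.2 h)
  have hw0 : ∀ x ∉ Ω, w x = 0 := fun x hx =>
    image_eq_zero_of_notMem_tsupport fun h => hx (hw.2.2 h)
  have hp0 : p ≠ 0 := by linarith
  have hwp : ∀ x, |w x| ^ p = w x * (|w x| ^ (p - 2) * w x) := by
    intro x
    by_cases h : w x = 0
    · simp [h, Real.zero_rpow hp0]
    · calc |w x| ^ p = |w x| ^ (p - 2) * |w x| ^ (2 : ℝ) := by
            rw [← Real.rpow_add (abs_pos.2 h)]; ring_nf
        _ = _ := by rw [Real.rpow_two, sq_abs]; ring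
  obtain ⟨L', hL'⟩ := ContDiff.lipschitzWith_of_hasCompactSupport (𝕂 := ℝ) hu.2.1 hu.1 (by simp)
  have hibp := hL'.integral_lineDeriv_mul_eq (μ := volume) hL hGc v
  have hlhs : ∫ x in Ω, |w x| ^ p * distBdry Ω x ^ a = ∫ x, lineDeriv ℝ u x v * G x := by
    rw [setIntegral_eq_integral_of_forall_compl_eq_zero
      fun x hx => by simp [hw0 x hx, Real.zero_rpow hp0]]
    refine integral_congr_ae (ae_of_all _ fun x => ?_)
    have : lineDeriv ℝ u x v = w x := by
      rw [(hu.differentiable x).lineDeriv_eq_fderiv, hwdef]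
    simp only [this, hwp, hG]
    ring
  have hwc : Continuous w := hw.1.continuous
  have hwpc : Continuous fun x => |w x| ^ (p - 2) :=
    hwc.abs.rpow_const fun _ => Or.inr (by linarith)
  have hc1 : Continuous fun x => |fderiv ℝ w x v| := (hw.fderiv_apply v).1.continuous.abs
  have hc2 : ContinuousOn (fun x => |w x| / distBdry Ω x) Ω :=
    hwc.abs.continuousOn.div lipschitzWith_distBdry.continuous.continuousOn
      fun x hx => (hδ x hx).ne'
  have hi1 := integrable_of_testFun hδ hu (F := fun x => |u x| * |w x| ^ (p - 2) * |fderiv ℝ w x v|)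
    ((hu.1.continuous.abs.mul hwpc).mul hc1).continuousOn
    (fun x hx => by simp [image_eq_zero_of_notMem_tsupport hx]) a
  have hi2 := integrable_of_testFun hδ hu
    (F := fun x => |u x| * |w x| ^ (p - 2) * (|w x| / distBdry Ω x))
    ((hu.1.continuous.abs.mul hwpc).continuousOn.mul hc2)
    (fun x hx => by simp [image_eq_zero_of_notMem_tsupport hx]) a
  rw [hlhs, hibp, setIntegral_eq_integral_of_forall_compl_eq_zero
      fun x hx => by simp [hu0 x hx], setIntegral_eq_integral_of_forall_compl_eq_zero
      fun x hx => by simp [hu0 x hx], ← integral_const_mul, ← integral_const_mul,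
      ← integral_add (hi1.const_mul _) (hi2.const_mul _)]
  refine (le_abs_self _).trans ?_
  rw [← Real.norm_eq_abs]
  refine norm_integral_le_of_norm_le ((hi1.const_mul _).add (hi2.const_mul _)) ?_
  -- Rademacher's theorem makes the product rule available at almost every point.
  filter_upwards [(lipschitzWith_distBdry (Ω := Ω)).ae_differentiableAt (μ := volume)] with x hx
  by_cases hxΩ : x ∈ Ω
  · have h := abs_lineDeriv_testField_le hp a (v := v) (hw.differentiable x) hx (hδ x hxΩ) hv
    rw [lineDeriv_neg, Real.norm_eq_abs, abs_mul, abs_neg]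
    refine (mul_le_mul_of_nonneg_right h (abs_nonneg (u x))).trans (le_of_eq ?_)
    ring
  · simp [hu0 x hxΩ]

/-- Hölder's inequality with exponents `r`, `p / (p - 2)`, `q` for the weight `δ^a`. -/
theorem integral_mul_rpow_mul_le (hΩo : IsOpen Ω) (hδ : ∀ x ∈ Ω, 0 < distBdry Ω x)
    {u w : E n → ℝ} (hu : TestFun Ω u) (hw : TestFun Ω w)
    {p q r : ℝ} (hp : 2 ≤ p) (hq : 1 < q) (hr : 1 < r) (hpqr : 2 / p = 1 / q + 1 / r) (a : ℝ)
    {h : E n → ℝ} (hh0 : ∀ x, 0 ≤ h x) (hh : ContinuousOn h Ω)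
    (hhs : ∀ x ∉ tsupport u, h x = 0) :
    ∫ x in Ω, |u x| * |w x| ^ (p - 2) * h x * distBdry Ω x ^ a ≤
      (∫ x in Ω, |u x| ^ r * distBdry Ω x ^ a) ^ (1 / r) *
        (∫ x in Ω, |w x| ^ p * distBdry Ω x ^ a) ^ (1 - 2 / p) *
          (∫ x in Ω, h x ^ q * distBdry Ω x ^ a) ^ (1 / q) := by
  have hd0 : ∀ x, 0 ≤ distBdry Ω x ^ a := fun x => Real.rpow_nonneg (distBdry_nonneg x) _
  have hi1 := integrable_of_testFun hδ hu (F := fun x => |u x| ^ r)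
    (hu.1.continuous.abs.rpow_const fun _ => Or.inr (by linarith)).continuousOn
    (fun x hx => by
      simp [image_eq_zero_of_notMem_tsupport hx, Real.zero_rpow (by linarith : r ≠ 0)]) a
  have hi2 := integrable_of_testFun hδ hw (F := fun x => |w x| ^ p)
    (hw.1.continuous.abs.rpow_const fun _ => Or.inr (by linarith)).continuousOn
    (fun x hx => by
      simp [image_eq_zero_of_notMem_tsupport hx, Real.zero_rpow (by linarith : p ≠ 0)]) a
  have hi3 := integrable_of_testFun hδ hu (F := fun x => h x ^ q)
    (hh.rpow_const fun _ _ => Or.inr (by linarith))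
    (fun x hx => by simp [hhs x hx, Real.zero_rpow (by linarith : q ≠ 0)]) a
  have h2p : 2 / p ≤ 1 := (div_le_one (by linarith)).2 hp
  have H := integral_rpow_mul_rpow_mul_rpow_le (s := 1 / r) (t := 1 - 2 / p) (w := 1 / q)
    (hi1.restrict (s := Ω)) (hi2.restrict (s := Ω)) (hi3.restrict (s := Ω))
    (fun x => mul_nonneg (Real.rpow_nonneg (abs_nonneg _) _) (hd0 x))
    (fun x => mul_nonneg (Real.rpow_nonneg (abs_nonneg _) _) (hd0 x))
    (fun x => mul_nonneg (Real.rpow_nonneg (hh0 x) _) (hd0 x))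
    (by positivity) (by linarith) (by positivity) (by linarith)
  refine le_trans (le_of_eq (setIntegral_congr_fun hΩo.measurableSet fun x hx => ?_)) H
  have hd : 0 < distBdry Ω x ^ a := Real.rpow_pos_of_pos (hδ x hx) _
  rw [Real.mul_rpow (Real.rpow_nonneg (abs_nonneg _) _) hd.le,
    Real.mul_rpow (Real.rpow_nonneg (abs_nonneg _) _) hd.le,
    Real.mul_rpow (Real.rpow_nonneg (hh0 x) _) hd.le,
    ← Real.rpow_mul (abs_nonneg _), ← Real.rpow_mul (abs_nonneg _), ← Real.rpow_mul (hh0 x)]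
  have e1 : r * (1 / r) = 1 := mul_one_div_cancel (by linarith)
  have e2 : p * (1 - 2 / p) = p - 2 := by field_simp
  have e3 : q * (1 / q) = 1 := mul_one_div_cancel (by linarith)
  have e4 : (distBdry Ω x ^ a) ^ (1 / r) * (distBdry Ω x ^ a) ^ (1 - 2 / p) *
      (distBdry Ω x ^ a) ^ (1 / q) = distBdry Ω x ^ a := by
    rw [← Real.rpow_add hd, ← Real.rpow_add hd,
      show 1 / r + (1 - 2 / p) + 1 / q = 1 by linarith, Real.rpow_one]
  rw [e1, e2, e3, Real.rpow_one, Real.rpow_one]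
  nth_rewrite 1 [← e4]
  ring

/-! ### Gradient and Hessian in coordinates -/

theorem hessNormHS_nonneg (u : E n → ℝ) (x : E n) : 0 ≤ hessNormHS u x := Real.sqrt_nonneg _

theorem continuous_hessNormHS {u : E n → ℝ} (hu : TestFun Ω u) : Continuous (hessNormHS u) := by
  unfold hessNormHS
  have hc : Continuous (iteratedFDeriv ℝ 2 u) := hu.1.continuous_iteratedFDeriv (by norm_cast)
  refine Real.continuous_sqrt.comp (continuous_finsetSum _ fun i _ =>
    continuous_finsetSum _ fun j _ => Continuous.pow ?_ 2)
  fun_prop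

theorem hessNormHS_eq_zero {u : E n → ℝ} {x : E n} (hx : x ∉ tsupport u) :
    hessNormHS u x = 0 := by
  have h : iteratedFDeriv ℝ 2 u x = 0 :=
    image_eq_zero_of_notMem_tsupport fun h => hx (tsupport_iteratedFDeriv_subset 2 h)
  simp [hessNormHS, h]

theorem norm_gradient_sq (w : E n → ℝ) (x : E n) :
    ‖gradient w x‖ ^ 2 = ∑ j : Fin n, (fderiv ℝ w x (EuclideanSpace.single j 1)) ^ 2 := by
  rw [EuclideanSpace.norm_sq_eq]
  refine Finset.sum_congr rfl fun j _ => ?_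
  rw [Real.norm_eq_abs, sq_abs]
  congr 1
  rw [← InnerProductSpace.toDual_symm_apply (𝕜 := ℝ), EuclideanSpace.inner_single_right]
  simp [gradient]

theorem norm_gradient_fderiv_apply_le {u : E n → ℝ} (hu : TestFun Ω u) (i : Fin n) (x : E n) :
    ‖gradient (fun x => fderiv ℝ u x (EuclideanSpace.single i 1)) x‖ ≤ hessNormHS u x := by
  refine Real.le_sqrt_of_sq_le ?_
  rw [norm_gradient_sq]
  refine Finset.sum_le_sum fun j _ => ?_
  have hd : DifferentiableAt ℝ (fderiv ℝ u) x :=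
    ((hu.1.fderiv_right (m := 1) (by norm_cast)).differentiable (by simp)).differentiableAt
  have h : fderiv ℝ (fun x => fderiv ℝ u x (EuclideanSpace.single i 1)) x
      (EuclideanSpace.single j 1) =
      iteratedFDeriv ℝ 2 u x ![EuclideanSpace.single j 1, EuclideanSpace.single i 1] := by
    rw [iteratedFDeriv_two_apply, fderiv_clm_apply hd (differentiableAt_const _)]
    simp
  rw [h]
  exact Finset.single_le_sum (f := fun k : Fin n => (iteratedFDeriv ℝ 2 u x
    ![EuclideanSpace.single j 1, EuclideanSpace.single k 1]) ^ 2) (fun k _ => sq_nonneg _)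
    (Finset.mem_univ i)

theorem abs_fderiv_apply_single_le (w : E n → ℝ) (j : Fin n) (x : E n) :
    |fderiv ℝ w x (EuclideanSpace.single j 1)| ≤ ‖gradient w x‖ := by
  refine abs_le_of_sq_le_sq ?_ (norm_nonneg _)
  rw [norm_gradient_sq]
  exact Finset.single_le_sum (f := fun k : Fin n =>
    (fderiv ℝ w x (EuclideanSpace.single k 1)) ^ 2) (fun k _ => sq_nonneg _) (Finset.mem_univ j)

theorem norm_gradient_rpow_le (u : E n → ℝ) (x : E n) {p : ℝ} (hp : 0 < p) :
    ‖gradient u x‖ ^ p ≤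
      (n : ℝ) ^ (p / 2) * ∑ i : Fin n, |fderiv ℝ u x (EuclideanSpace.single i 1)| ^ p := by
  rcases isEmpty_or_nonempty (Fin n) with hn | hn
  · have : ‖gradient u x‖ = 0 := by
      have h := norm_gradient_sq u x
      rw [Finset.univ_eq_empty, Finset.sum_empty] at h
      exact pow_eq_zero_iff (two_ne_zero) |>.1 h
    rw [this, Real.zero_rpow hp.ne']
    positivity
  · obtain ⟨i, hi⟩ := Finite.exists_max fun i : Fin n =>
      |fderiv ℝ u x (EuclideanSpace.single i 1)|
    set M := |fderiv ℝ u x (EuclideanSpace.single i 1)| with hM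
    have hM0 : 0 ≤ M := abs_nonneg _
    have h1 : ‖gradient u x‖ ^ 2 ≤ n * M ^ 2 := by
      rw [norm_gradient_sq]
      refine (Finset.sum_le_card_nsmul _ _ (M ^ 2) fun j _ => ?_).trans (by simp)
      rw [← sq_abs]
      exact pow_le_pow_left₀ (abs_nonneg _) (hi j) 2
    calc ‖gradient u x‖ ^ p = (‖gradient u x‖ ^ 2) ^ (p / 2) := by
          rw [← Real.rpow_natCast, ← Real.rpow_mul (norm_nonneg _)]
          congr 1; push_cast; ring
      _ ≤ (n * M ^ 2) ^ (p / 2) := by gcongr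
      _ = (n : ℝ) ^ (p / 2) * M ^ p := by
          rw [Real.mul_rpow (by positivity) (by positivity), ← Real.rpow_natCast M,
            ← Real.rpow_mul hM0]
          congr 2; push_cast; ring
      _ ≤ _ := by
          gcongr
          exact Finset.single_le_sum (f := fun i : Fin n =>
            |fderiv ℝ u x (EuclideanSpace.single i 1)| ^ p)
            (fun k _ => Real.rpow_nonneg (abs_nonneg _) _) (Finset.mem_univ i)

/-! ### The inequality for one partial derivative and its summation -/

/-- The absorption step: a factor `J ^ (1 - 2 / p)` on the right is divided out. It needs no
finiteness argument since `J` is a real number, and `J = 0` is harmless because `2 / p ≠ 0`. -/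
theorem rpow_le_of_le_mul_rpow {J B p : ℝ} (hp : 2 ≤ p) (hJ : 0 ≤ J) (hB : 0 ≤ B)
    (h : J ≤ B * J ^ (1 - 2 / p)) : J ^ (2 / p) ≤ B := by
  rcases hJ.eq_or_lt with rfl | hJ
  · rwa [Real.zero_rpow (by positivity)]
  · have hpos : 0 < J ^ (1 - 2 / p) := Real.rpow_pos_of_pos hJ _
    have h1 : J ^ (2 / p) * J ^ (1 - 2 / p) = J := by
      rw [← Real.rpow_add hJ]; simp
    exact le_of_mul_le_mul_right (h1.trans_le h) hpos

/-- The theorem for a single partial derivative, with an explicit constant. -/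
theorem rpow_integral_fderiv_apply_le (hΩo : IsOpen Ω) (hδ : ∀ x ∈ Ω, 0 < distBdry Ω x)
    {p q r a C : ℝ} (hp : 2 ≤ p) (hq : 1 < q) (hr : 1 < r) (hpqr : 2 / p = 1 / q + 1 / r)
    (hHardy : ∀ u : E n → ℝ, TestFun Ω u →
      ∫ x in Ω, (|u x| / distBdry Ω x) ^ q * distBdry Ω x ^ a ≤
        C * ∫ x in Ω, ‖gradient u x‖ ^ q * distBdry Ω x ^ a)
    {u : E n → ℝ} (hu : TestFun Ω u) (i : Fin n) :
    (∫ x in Ω, |fderiv ℝ u x (EuclideanSpace.single i 1)| ^ p * distBdry Ω x ^ a) ^ (2 / p) ≤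
      (p - 1 + |a| * (max C 0) ^ (1 / q)) *
        (∫ x in Ω, hessNormHS u x ^ q * distBdry Ω x ^ a) ^ (1 / q) *
          (∫ x in Ω, |u x| ^ r * distBdry Ω x ^ a) ^ (1 / r) := by
  set w : E n → ℝ := fun x => fderiv ℝ u x (EuclideanSpace.single i 1) with hwdef
  have hw : TestFun Ω w := hu.fderiv_apply _
  have hv : ‖(EuclideanSpace.single i 1 : E n)‖ ≤ 1 := by simp
  have hd0 : ∀ x, 0 ≤ distBdry Ω x ^ a := fun x => Real.rpow_nonneg (distBdry_nonneg x) _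
  have hq0 : 0 < q := by linarith
  have hwu : ∀ x ∉ tsupport u, w x = 0 := fun x hx =>
    image_eq_zero_of_notMem_tsupport fun h => hx (tsupport_fderiv_apply_subset ℝ _ h)
  have hiH := integrable_of_testFun hδ hu (F := fun x => hessNormHS u x ^ q)
    ((continuous_hessNormHS hu).rpow_const fun _ => Or.inr hq0.le).continuousOn
    (fun x hx => by simp [hessNormHS_eq_zero hx, Real.zero_rpow hq0.ne']) a
  have hmono : ∀ {f : E n → ℝ}, (∀ x, 0 ≤ f x) → (∀ x, f x ≤ hessNormHS u x) →
      ∫ x in Ω, f x ^ q * distBdry Ω x ^ a ≤ ∫ x in Ω, hessNormHS u x ^ q * distBdry Ω x ^ a := by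
    intro f hf0 hf
    refine integral_mono_of_nonneg
      (ae_of_all _ fun x => mul_nonneg (Real.rpow_nonneg (hf0 x) _) (hd0 x)) hiH.restrict
      (ae_of_all _ fun x => ?_)
    exact mul_le_mul_of_nonneg_right (Real.rpow_le_rpow (hf0 x) (hf x) hq0.le) (hd0 x)
  have hbase := integral_rpow_fderiv_apply_le hδ hu hp a hv hwdef
  have hH1 := integral_mul_rpow_mul_le hΩo hδ hu hw hp hq hr hpqr a
    (h := fun x => |fderiv ℝ w x (EuclideanSpace.single i 1)|) (fun x => abs_nonneg _)
    (hw.fderiv_apply _).1.continuous.abs.continuousOn (fun x hx => by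
      have h : x ∉ tsupport w := fun h => hx (tsupport_fderiv_apply_subset ℝ _ h)
      have := image_eq_zero_of_notMem_tsupport
        fun h' => h (tsupport_fderiv_apply_subset ℝ (EuclideanSpace.single i (1 : ℝ)) h')
      simpa using this)
  have hH2 := integral_mul_rpow_mul_le hΩo hδ hu hw hp hq hr hpqr a
    (h := fun x => |w x| / distBdry Ω x)
    (fun x => div_nonneg (abs_nonneg _) (distBdry_nonneg x))
    (hw.1.continuous.abs.continuousOn.div lipschitzWith_distBdry.continuous.continuousOn
      fun x hx => (hδ x hx).ne') (fun x hx => by simp [hwu x hx])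
  set J := ∫ x in Ω, |w x| ^ p * distBdry Ω x ^ a with hJ
  set U := (∫ x in Ω, |u x| ^ r * distBdry Ω x ^ a) ^ (1 / r) with hU
  set I := ∫ x in Ω, hessNormHS u x ^ q * distBdry Ω x ^ a with hI
  have hJ0 : 0 ≤ J := integral_nonneg fun x =>
    mul_nonneg (Real.rpow_nonneg (abs_nonneg _) _) (hd0 x)
  have hU0 : 0 ≤ U := Real.rpow_nonneg (integral_nonneg fun x =>
    mul_nonneg (Real.rpow_nonneg (abs_nonneg _) _) (hd0 x)) _
  have hI0 : 0 ≤ I := integral_nonneg fun x =>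
    mul_nonneg (Real.rpow_nonneg (hessNormHS_nonneg u x) _) (hd0 x)
  have hB1 : (∫ x in Ω, |fderiv ℝ w x (EuclideanSpace.single i 1)| ^ q * distBdry Ω x ^ a) ^ (1 / q)
      ≤ I ^ (1 / q) := by
    refine Real.rpow_le_rpow (integral_nonneg fun x =>
      mul_nonneg (Real.rpow_nonneg (abs_nonneg _) _) (hd0 x)) ?_ (by positivity)
    exact hmono (fun x => abs_nonneg _) fun x =>
      (abs_fderiv_apply_single_le w i x).trans (norm_gradient_fderiv_apply_le hu i x)
  have hB2 : (∫ x in Ω, (|w x| / distBdry Ω x) ^ q * distBdry Ω x ^ a) ^ (1 / q)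
      ≤ (max C 0) ^ (1 / q) * I ^ (1 / q) := by
    rw [← Real.mul_rpow (le_max_right _ _) hI0]
    refine Real.rpow_le_rpow (integral_nonneg fun x => mul_nonneg
      (Real.rpow_nonneg (div_nonneg (abs_nonneg _) (distBdry_nonneg x)) _) (hd0 x)) ?_
      (by positivity)
    have hg0 : 0 ≤ ∫ x in Ω, ‖gradient w x‖ ^ q * distBdry Ω x ^ a := integral_nonneg fun x =>
      mul_nonneg (Real.rpow_nonneg (norm_nonneg _) _) (hd0 x)
    calc _ ≤ C * ∫ x in Ω, ‖gradient w x‖ ^ q * distBdry Ω x ^ a := hHardy w hw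
      _ ≤ max C 0 * ∫ x in Ω, ‖gradient w x‖ ^ q * distBdry Ω x ^ a :=
        mul_le_mul_of_nonneg_right (le_max_left _ _) hg0
      _ ≤ max C 0 * I := mul_le_mul_of_nonneg_left
        (hmono (fun x => norm_nonneg _) (norm_gradient_fderiv_apply_le hu i)) (le_max_right _ _)
  have hC0 : 0 ≤ (max C 0) ^ (1 / q) := Real.rpow_nonneg (le_max_right _ _) _
  have hIq : 0 ≤ I ^ (1 / q) := Real.rpow_nonneg hI0 _
  have hJp : 0 ≤ J ^ (1 - 2 / p) := Real.rpow_nonneg hJ0 _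
  have hp1 : 0 ≤ p - 1 := by linarith
  refine rpow_le_of_le_mul_rpow hp hJ0 (by positivity) ?_
  calc J ≤ _ := hbase
    _ ≤ (p - 1) * (U * J ^ (1 - 2 / p) * I ^ (1 / q)) +
        |a| * (U * J ^ (1 - 2 / p) * ((max C 0) ^ (1 / q) * I ^ (1 / q))) := by
      gcongr
      · exact hH1.trans (by gcongr)
      · exact hH2.trans (by gcongr)
    _ = _ := by ring

/-- The partial derivatives are added up: `|∇u|^p ≤ n^(p/2) ∑ |∂_i u|^p`. -/
theorem rpow_integral_norm_gradient_le {u : E n → ℝ} (hδ : ∀ x ∈ Ω, 0 < distBdry Ω x)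
    (hu : TestFun Ω u) {p a B : ℝ} (hp : 2 ≤ p) (hB : 0 ≤ B)
    (h : ∀ i : Fin n, (∫ x in Ω, |fderiv ℝ u x (EuclideanSpace.single i 1)| ^ p *
      distBdry Ω x ^ a) ^ (2 / p) ≤ B) :
    (∫ x in Ω, ‖gradient u x‖ ^ p * distBdry Ω x ^ a) ^ (2 / p) ≤
      ((n : ℝ) ^ (p / 2) * n) ^ (2 / p) * B := by
  have hp0 : 0 < p := by linarith
  have hd0 : ∀ x, 0 ≤ distBdry Ω x ^ a := fun x => Real.rpow_nonneg (distBdry_nonneg x) _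
  have hi : ∀ i : Fin n, Integrable fun x =>
      |fderiv ℝ u x (EuclideanSpace.single i 1)| ^ p * distBdry Ω x ^ a := fun i =>
    integrable_of_testFun hδ (hu.fderiv_apply (EuclideanSpace.single i 1))
      ((hu.fderiv_apply _).1.continuous.abs.rpow_const fun _ => Or.inr hp0.le).continuousOn
      (fun x hx => by rw [image_eq_zero_of_notMem_tsupport hx, abs_zero, Real.zero_rpow hp0.ne']) a
  have hJ0 : ∀ i : Fin n, 0 ≤ ∫ x in Ω, |fderiv ℝ u x (EuclideanSpace.single i 1)| ^ p *
      distBdry Ω x ^ a := fun i => integral_nonneg fun x =>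
    mul_nonneg (Real.rpow_nonneg (abs_nonneg _) _) (hd0 x)
  have h' : ∀ i : Fin n, ∫ x in Ω, |fderiv ℝ u x (EuclideanSpace.single i 1)| ^ p *
      distBdry Ω x ^ a ≤ B ^ (p / 2) := fun i => by
    refine le_of_eq_of_le ?_ (Real.rpow_le_rpow (Real.rpow_nonneg (hJ0 i) _) (h i)
      (by positivity : 0 ≤ p / 2))
    rw [← Real.rpow_mul (hJ0 i), show 2 / p * (p / 2) = 1 by field_simp, Real.rpow_one]
  have hint : ∫ x in Ω, ‖gradient u x‖ ^ p * distBdry Ω x ^ a ≤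
      (n : ℝ) ^ (p / 2) * n * B ^ (p / 2) := by
    calc ∫ x in Ω, ‖gradient u x‖ ^ p * distBdry Ω x ^ a
        ≤ ∫ x in Ω, (n : ℝ) ^ (p / 2) * ∑ i : Fin n,
            |fderiv ℝ u x (EuclideanSpace.single i 1)| ^ p * distBdry Ω x ^ a := by
          refine integral_mono_of_nonneg (ae_of_all _ fun x =>
            mul_nonneg (Real.rpow_nonneg (norm_nonneg _) _) (hd0 x))
            ((integrable_finsetSum _ fun i _ => (hi i).restrict).const_mul _)
            (ae_of_all _ fun x => ?_)
          refine (mul_le_mul_of_nonneg_right (norm_gradient_rpow_le u x hp0) (hd0 x)).trans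
            (le_of_eq ?_)
          simp only [Finset.sum_mul, mul_assoc]
      _ = (n : ℝ) ^ (p / 2) * ∑ i : Fin n, ∫ x in Ω,
            |fderiv ℝ u x (EuclideanSpace.single i 1)| ^ p * distBdry Ω x ^ a := by
          rw [integral_const_mul, integral_finsetSum _ fun i _ => (hi i).restrict]
      _ ≤ (n : ℝ) ^ (p / 2) * (n * B ^ (p / 2)) := by
          gcongr
          refine (Finset.sum_le_card_nsmul _ _ _ fun i _ => h' i).trans (by simp)
      _ = _ := by ring
  calc _ ≤ ((n : ℝ) ^ (p / 2) * n * B ^ (p / 2)) ^ (2 / p) :=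
        Real.rpow_le_rpow (integral_nonneg fun x =>
          mul_nonneg (Real.rpow_nonneg (norm_nonneg _) _) (hd0 x)) hint (by positivity)
    _ = _ := by
        rw [Real.mul_rpow (by positivity) (by positivity), ← Real.rpow_mul hB,
          show p / 2 * (2 / p) = 1 by field_simp, Real.rpow_one]

end

/-- Theorem 4.7(i): weighted Gagliardo–Nirenberg inequality with the weight
`δ(x)^a`, where `δ` is the distance to the boundary, in the `L^p` scale. -/
theorem statement13 {n : ℕ} (Ω : Set (E n)) (hΩo : IsOpen Ω)
    (hΩb : Bornology.IsBounded Ω)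
    (q a : ℝ) (hq : 1 < q) (ha : a < q - 1)
    (C : ℝ)
    (hHardy : ∀ u : E n → ℝ, TestFun Ω u →
      ∫ x in Ω, (|u x| / distBdry Ω x) ^ q * distBdry Ω x ^ a ≤
        C * ∫ x in Ω, ‖gradient u x‖ ^ q * distBdry Ω x ^ a)
    (p r : ℝ) (hp : 2 ≤ p) (hr : 1 < r) (hpqr : 2 / p = 1 / q + 1 / r) :
    ∃ c > (0:ℝ), ∀ u : E n → ℝ, TestFun Ω u →
      (∫ x in Ω, ‖gradient u x‖ ^ p * distBdry Ω x ^ a) ^ (2 / p) ≤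
        c * (∫ x in Ω, hessNormHS u x ^ q * distBdry Ω x ^ a) ^ (1 / q) *
          (∫ x in Ω, |u x| ^ r * distBdry Ω x ^ a) ^ (1 / r) := by
  rcases Nat.eq_zero_or_pos n with rfl | hn
  · -- In dimension `0` the gradient vanishes identically.
    refine ⟨1, one_pos, fun u _ => ?_⟩
    have hd0 : ∀ x, 0 ≤ distBdry Ω x ^ a := fun x => Real.rpow_nonneg (distBdry_nonneg x) _
    have h0 : ∀ x : E 0, ‖gradient u x‖ ^ p * distBdry Ω x ^ a = 0 := fun x => by
      rw [Subsingleton.elim (gradient u x) 0, norm_zero, Real.zero_rpow (by linarith), zero_mul]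
    simp only [h0, integral_zero]
    rw [Real.zero_rpow (by positivity)]
    exact mul_nonneg (mul_nonneg zero_le_one (Real.rpow_nonneg (integral_nonneg fun x =>
      mul_nonneg (Real.rpow_nonneg (hessNormHS_nonneg u x) _) (hd0 x)) _))
      (Real.rpow_nonneg (integral_nonneg fun x =>
        mul_nonneg (Real.rpow_nonneg (abs_nonneg _) _) (hd0 x)) _)
  · have : NeZero n := ⟨hn.ne'⟩
    have hδ : ∀ x ∈ Ω, 0 < distBdry Ω x := fun x hx => distBdry_pos hΩo hΩb hx
    have hd0 : ∀ x, 0 ≤ distBdry Ω x ^ a := fun x => Real.rpow_nonneg (distBdry_nonneg x) _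
    have hn' : (0 : ℝ) < n := by exact_mod_cast hn
    have hA : 0 < p - 1 + |a| * (max C 0) ^ (1 / q) :=
      add_pos_of_pos_of_nonneg (by linarith)
        (mul_nonneg (abs_nonneg _) (Real.rpow_nonneg (le_max_right _ _) _))
    refine ⟨((n : ℝ) ^ (p / 2) * n) ^ (2 / p) * (p - 1 + |a| * (max C 0) ^ (1 / q)),
      by positivity, fun u hu => ?_⟩
    refine (rpow_integral_norm_gradient_le hδ hu hp ?_ fun i =>
      rpow_integral_fderiv_apply_le hΩo hδ hp hq hr hpqr hHardy hu i).trans (le_of_eq (by ring))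
    exact mul_nonneg (mul_nonneg hA.le (Real.rpow_nonneg (integral_nonneg fun x =>
      mul_nonneg (Real.rpow_nonneg (hessNormHS_nonneg u x) _) (hd0 x)) _))
      (Real.rpow_nonneg (integral_nonneg fun x =>
        mul_nonneg (Real.rpow_nonneg (abs_nonneg _) _) (hd0 x)) _)
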